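/- (Acyclic normalisation) Every acyclic diagram d : ▶^m → ▶^n in Syn_M is PGA-equal to an acyclic diagram in normal form. -/

import Mathlib

set_option autoImplicit true

namespace PaperPG

/-! ## The diagrammatic syntax `Syn_M` and the equational theory PGA -/

/-- The two generating objects (wire colours): `r` = ▶ and `l` = ◀. -/
inductive Obj : Type
  | r : Obj
  | l : Obj
  deriving DecidableEq

/-- Objects of the free prop: words over `{▶, ◀}`. -/
abbrev Word := List Obj

/-- The word `▶^m`. -/
def rword (m : ℕ) : Word := List.replicate m Obj.r

/-- Morphisms of the free two-coloured prop `Syn_M`: formal (sequential and parallel)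
composites of identities, symmetries and the generators of the calculus of parity
games, with priorities bounded by `M`. -/
inductive Syn (M : ℕ) : Word → Word → Type where
  | id : (v : Word) → Syn M v v
  | comp : {u v w : Word} → Syn M u v → Syn M v w → Syn M u w
  | tensor : {u1 w1 u2 w2 : Word} → Syn M u1 w1 → Syn M u2 w2 → Syn M (u1 ++ u2) (w1 ++ w2)
  | symm : (v w : Word) → Syn M (v ++ w) (w ++ v)
  | player0 : Syn M [Obj.r] [Obj.r, Obj.r]
  | lose0 : Syn M [Obj.r] []
  | player1 : Syn M [Obj.r] [Obj.r, Obj.r]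
  | lose1 : Syn M [Obj.r] []
  | merge : Syn M [Obj.r, Obj.r] [Obj.r]
  | start : Syn M [] [Obj.r]
  | priority : Fin (M + 1) → Syn M [Obj.r] [Obj.r]
  | cup : Syn M [] [Obj.r, Obj.l]
  | cap : Syn M [Obj.l, Obj.r] []

infixl:60 " ⨟ " => Syn.comp
infixl:65 " ⊠ " => Syn.tensor

/-- Transport a diagram along equalities of words. -/
def Syn.castHom {M : ℕ} {u u' w w' : Word} (hu : u = u') (hw : w = w')
    (f : Syn M u w) : Syn M u' w' := by
  subst hu; subst hw; exact f

/-- The inner body of the parity axiom: `merge ⨟ player0` followed by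
`(player1 ⨟ (id ⊠ priority p)) ⊠ id`. -/
def parityBody (M : ℕ) (p : Fin (M + 1)) : Syn M [Obj.r, Obj.r] [Obj.r, Obj.r, Obj.r] :=
  Syn.merge ⨟ Syn.player0
    ⨟ ((Syn.player1 ⨟ (Syn.id [Obj.r] ⊠ Syn.priority p) : Syn M [Obj.r] [Obj.r, Obj.r])
        ⊠ Syn.id [Obj.r])

/-- The left-hand side of the parity axiom (E): the feedback loop formed, via `cup`
and `cap`, by feeding the `priority p` output of `parityBody` back to its second
input. -/
def parityLHS (M : ℕ) (p : Fin (M + 1)) : Syn M [Obj.r] [Obj.r, Obj.r] :=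
  (Syn.id [Obj.r] ⊠ Syn.cup : Syn M [Obj.r] [Obj.r, Obj.r, Obj.l])
  ⨟ (parityBody M p ⊠ Syn.id [Obj.l] : Syn M [Obj.r, Obj.r, Obj.l] [Obj.r, Obj.r, Obj.r, Obj.l])
  ⨟ ((Syn.id [Obj.r] ⊠ Syn.id [Obj.r]) ⊠ Syn.symm [Obj.r] [Obj.l] :
      Syn M [Obj.r, Obj.r, Obj.r, Obj.l] [Obj.r, Obj.r, Obj.l, Obj.r])
  ⨟ ((Syn.id [Obj.r] ⊠ Syn.symm [Obj.r] [Obj.l]) ⊠ Syn.id [Obj.r] :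
      Syn M [Obj.r, Obj.r, Obj.l, Obj.r] [Obj.r, Obj.l, Obj.r, Obj.r])
  ⨟ ((Syn.id [Obj.r] ⊠ Syn.cap) ⊠ Syn.id [Obj.r] :
      Syn M [Obj.r, Obj.l, Obj.r, Obj.r] [Obj.r, Obj.r])

/-- The smallest congruence (with respect to sequential and parallel composition) on
the morphisms of `Syn_M` containing the laws of symmetric monoidal categories and the
axioms of Parity Game Algebra (PGA): (A) compact closure and loop removal,
(B) the distributive lattice axioms, (C) the priority axioms, (D) the distributive
law of priorities over the lattice structure and (E) the parity axiom. -/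
inductive PGAeq {M : ℕ} : {v w : Word} → Syn M v w → Syn M v w → Prop where
  -- equivalence
  | refl (f : Syn M v w) : PGAeq f f
  | symm_rel {f g : Syn M v w} : PGAeq f g → PGAeq g f
  | trans {f g h : Syn M v w} : PGAeq f g → PGAeq g h → PGAeq f h
  -- congruence with respect to the two compositions
  | comp_congr {f f' : Syn M u v} {g g' : Syn M v w} :
      PGAeq f f' → PGAeq g g' → PGAeq (f ⨟ g) (f' ⨟ g')
  | tensor_congr {f f' : Syn M u1 w1} {g g' : Syn M u2 w2} :
      PGAeq f f' → PGAeq g g' → PGAeq (f ⊠ g) (f' ⊠ g')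
  -- laws of (strict) symmetric monoidal categories
  | comp_assoc (f : Syn M u v) (g : Syn M v w) (h : Syn M w x) :
      PGAeq ((f ⨟ g) ⨟ h) (f ⨟ (g ⨟ h))
  | id_comp (f : Syn M v w) : PGAeq (Syn.id v ⨟ f) f
  | comp_id (f : Syn M v w) : PGAeq (f ⨟ Syn.id w) f
  | tensor_id (v w : Word) : PGAeq (Syn.id v ⊠ Syn.id w) (Syn.id (v ++ w))
  | interchange (f1 : Syn M u1 v1) (g1 : Syn M v1 w1) (f2 : Syn M u2 v2) (g2 : Syn M v2 w2) :
      PGAeq ((f1 ⨟ g1) ⊠ (f2 ⨟ g2)) ((f1 ⊠ f2) ⨟ (g1 ⊠ g2))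
  | tensor_assoc (f : Syn M u1 w1) (g : Syn M u2 w2) (h : Syn M u3 w3) :
      PGAeq (Syn.castHom (List.append_assoc u1 u2 u3) (List.append_assoc w1 w2 w3)
              ((f ⊠ g) ⊠ h))
            (f ⊠ (g ⊠ h))
  | tensor_nil (f : Syn M u w) :
      PGAeq (Syn.castHom (List.append_nil u) (List.append_nil w) (f ⊠ Syn.id [])) f
  | swap_nat (f : Syn M u1 w1) (g : Syn M u2 w2) :
      PGAeq ((f ⊠ g) ⨟ Syn.symm w1 w2) (Syn.symm u1 u2 ⨟ (g ⊠ f))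
  | swap_inv (v w : Word) : PGAeq (Syn.symm v w ⨟ Syn.symm w v) (Syn.id (v ++ w))
  | hexagon (u v w : Word) :
      PGAeq (Syn.symm u (v ++ w))
        (Syn.castHom (List.append_assoc u v w) (List.append_assoc v w u).symm
          ((Syn.symm u v ⊠ Syn.id w)
            ⨟ Syn.castHom (List.append_assoc v u w).symm rfl (Syn.id v ⊠ Syn.symm u w)))
  -- (A) compact closure: yanking, and removal of a closed loop
  | yank_r : PGAeq (v := [Obj.r]) (w := [Obj.r]) ((Syn.cup ⊠ Syn.id [Obj.r]) ⨟ (Syn.id [Obj.r] ⊠ Syn.cap))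
      (Syn.id [Obj.r])
  | yank_l : PGAeq (v := [Obj.l]) (w := [Obj.l]) ((Syn.id [Obj.l] ⊠ Syn.cup) ⨟ (Syn.cap ⊠ Syn.id [Obj.l]))
      (Syn.id [Obj.l])
  | loop : PGAeq (v := ([] : Word)) (w := ([] : Word)) (Syn.cup ⨟ Syn.symm [Obj.r] [Obj.l] ⨟ Syn.cap) (Syn.id [])
  -- (B) distributive lattice axioms
  | B1 : PGAeq (v := [Obj.r, Obj.r, Obj.r]) (w := [Obj.r]) ((Syn.merge ⊠ Syn.id [Obj.r]) ⨟ Syn.merge)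
      ((Syn.id [Obj.r] ⊠ Syn.merge) ⨟ Syn.merge)
  | B2 : PGAeq (v := [Obj.r, Obj.r]) (w := [Obj.r]) (Syn.symm [Obj.r] [Obj.r] ⨟ Syn.merge) Syn.merge
  | B3r : PGAeq (v := [Obj.r]) (w := [Obj.r]) ((Syn.id [Obj.r] ⊠ Syn.start) ⨟ Syn.merge) (Syn.id [Obj.r])
  | B3l : PGAeq (v := [Obj.r]) (w := [Obj.r]) ((Syn.start ⊠ Syn.id [Obj.r]) ⨟ Syn.merge) (Syn.id [Obj.r])
  | B4 : PGAeq (v := [Obj.r]) (w := [Obj.r, Obj.r, Obj.r]) (Syn.player0 ⨟ (Syn.player0 ⊠ Syn.id [Obj.r]))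
      (Syn.player0 ⨟ (Syn.id [Obj.r] ⊠ Syn.player0))
  | B5 : PGAeq (v := [Obj.r]) (w := [Obj.r, Obj.r]) (Syn.player0 ⨟ Syn.symm [Obj.r] [Obj.r]) Syn.player0
  | B6r : PGAeq (v := [Obj.r]) (w := [Obj.r]) (Syn.player0 ⨟ (Syn.lose0 ⊠ Syn.id [Obj.r])) (Syn.id [Obj.r])
  | B6l : PGAeq (v := [Obj.r]) (w := [Obj.r]) (Syn.player0 ⨟ (Syn.id [Obj.r] ⊠ Syn.lose0)) (Syn.id [Obj.r])
  | B7 : PGAeq (v := [Obj.r]) (w := [Obj.r, Obj.r, Obj.r]) (Syn.player1 ⨟ (Syn.player1 ⊠ Syn.id [Obj.r]))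
      (Syn.player1 ⨟ (Syn.id [Obj.r] ⊠ Syn.player1))
  | B8 : PGAeq (v := [Obj.r]) (w := [Obj.r, Obj.r]) (Syn.player1 ⨟ Syn.symm [Obj.r] [Obj.r]) Syn.player1
  | B9r : PGAeq (v := [Obj.r]) (w := [Obj.r]) (Syn.player1 ⨟ (Syn.lose1 ⊠ Syn.id [Obj.r])) (Syn.id [Obj.r])
  | B9l : PGAeq (v := [Obj.r]) (w := [Obj.r]) (Syn.player1 ⨟ (Syn.id [Obj.r] ⊠ Syn.lose1)) (Syn.id [Obj.r])
  | B10 : PGAeq (v := [Obj.r, Obj.r]) (w := [Obj.r, Obj.r]) (Syn.merge ⨟ Syn.player0)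
      ((Syn.player0 ⊠ Syn.player0)
        ⨟ ((Syn.id [Obj.r] ⊠ Syn.symm [Obj.r] [Obj.r]) ⊠ Syn.id [Obj.r] :
          Syn M [Obj.r, Obj.r, Obj.r, Obj.r] [Obj.r, Obj.r, Obj.r, Obj.r])
        ⨟ (Syn.merge ⊠ Syn.merge))
  | B11 : PGAeq (v := [Obj.r, Obj.r]) (w := ([] : Word)) (Syn.merge ⨟ Syn.lose0) (Syn.lose0 ⊠ Syn.lose0)
  | B12 : PGAeq (v := ([] : Word)) (w := [Obj.r, Obj.r]) (Syn.start ⨟ Syn.player0) (Syn.start ⊠ Syn.start)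
  | B13 : PGAeq (v := ([] : Word)) (w := [Obj.r, Obj.r]) (Syn.start ⨟ Syn.player1) (Syn.start ⊠ Syn.start)
  | B14 : PGAeq (v := ([] : Word)) (w := ([] : Word)) (Syn.start ⨟ Syn.lose0) (Syn.id [])
  | B15 : PGAeq (v := ([] : Word)) (w := ([] : Word)) (Syn.start ⨟ Syn.lose1) (Syn.id [])
  | B16 : PGAeq (v := [Obj.r]) (w := [Obj.r]) (Syn.player0 ⨟ Syn.merge) (Syn.id [Obj.r])
  | B17 : PGAeq (v := [Obj.r]) (w := [Obj.r]) (Syn.player1 ⨟ Syn.merge) (Syn.id [Obj.r])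
  | B18 : PGAeq (v := [Obj.r, Obj.r]) (w := [Obj.r, Obj.r]) (Syn.merge ⨟ Syn.player1)
      ((Syn.player1 ⊠ Syn.player1)
        ⨟ ((Syn.id [Obj.r] ⊠ Syn.symm [Obj.r] [Obj.r]) ⊠ Syn.id [Obj.r] :
          Syn M [Obj.r, Obj.r, Obj.r, Obj.r] [Obj.r, Obj.r, Obj.r, Obj.r])
        ⨟ (Syn.merge ⊠ Syn.merge))
  | B19 : PGAeq (v := [Obj.r, Obj.r]) (w := ([] : Word)) (Syn.merge ⨟ Syn.lose1) (Syn.lose1 ⊠ Syn.lose1)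
  | B20 : PGAeq (v := [Obj.r]) (w := [Obj.r, Obj.r, Obj.r]) (Syn.player0 ⨟ (Syn.player1 ⊠ Syn.id [Obj.r]))
      (Syn.player1 ⨟ (Syn.player0 ⊠ Syn.player0)
        ⨟ ((Syn.id [Obj.r] ⊠ Syn.symm [Obj.r] [Obj.r]) ⊠ Syn.id [Obj.r] :
          Syn M [Obj.r, Obj.r, Obj.r, Obj.r] [Obj.r, Obj.r, Obj.r, Obj.r])
        ⨟ ((Syn.id [Obj.r] ⊠ Syn.id [Obj.r]) ⊠ Syn.merge :
          Syn M [Obj.r, Obj.r, Obj.r, Obj.r] [Obj.r, Obj.r, Obj.r]))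
  | B21 : PGAeq (v := [Obj.r]) (w := [Obj.r]) (Syn.player0 ⨟ (Syn.lose1 ⊠ Syn.id [Obj.r])) (Syn.lose1 ⨟ Syn.start)
  | B22 : PGAeq (v := [Obj.r]) (w := [Obj.r, Obj.r, Obj.r]) (Syn.player1 ⨟ (Syn.player0 ⊠ Syn.id [Obj.r]))
      (Syn.player0 ⨟ (Syn.player1 ⊠ Syn.player1)
        ⨟ ((Syn.id [Obj.r] ⊠ Syn.symm [Obj.r] [Obj.r]) ⊠ Syn.id [Obj.r] :
          Syn M [Obj.r, Obj.r, Obj.r, Obj.r] [Obj.r, Obj.r, Obj.r, Obj.r])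
        ⨟ ((Syn.id [Obj.r] ⊠ Syn.id [Obj.r]) ⊠ Syn.merge :
          Syn M [Obj.r, Obj.r, Obj.r, Obj.r] [Obj.r, Obj.r, Obj.r]))
  | B23 : PGAeq (v := [Obj.r]) (w := [Obj.r]) (Syn.player1 ⨟ (Syn.lose0 ⊠ Syn.id [Obj.r])) (Syn.lose0 ⨟ Syn.start)
  -- (C) priority axioms
  | C1 (p : Fin (M + 1)) : PGAeq (v := [Obj.r, Obj.r]) (w := [Obj.r]) ((Syn.priority p ⊠ Syn.priority p) ⨟ Syn.merge)
      (Syn.merge ⨟ Syn.priority p)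
  | C2 (p : Fin (M + 1)) : PGAeq (v := ([] : Word)) (w := [Obj.r]) (Syn.start ⨟ Syn.priority p) Syn.start
  | C3 (p q : Fin (M + 1)) : PGAeq (v := [Obj.r]) (w := [Obj.r]) (Syn.priority p ⨟ Syn.priority q)
      (Syn.priority (max p q))
  | C4 : PGAeq (Syn.priority 0) (Syn.id [Obj.r])
  -- (D) distributive law of priorities over the lattice structure
  | D1 (p : Fin (M + 1)) : PGAeq (v := [Obj.r]) (w := [Obj.r, Obj.r]) (Syn.priority p ⨟ Syn.player0)
      (Syn.player0 ⨟ (Syn.priority p ⊠ Syn.priority p))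
  | D2 (p : Fin (M + 1)) : PGAeq (v := [Obj.r]) (w := ([] : Word)) (Syn.priority p ⨟ Syn.lose0) Syn.lose0
  | D3 (p : Fin (M + 1)) : PGAeq (v := [Obj.r]) (w := [Obj.r, Obj.r]) (Syn.priority p ⨟ Syn.player1)
      (Syn.player1 ⨟ (Syn.priority p ⊠ Syn.priority p))
  | D4 (p : Fin (M + 1)) : PGAeq (v := [Obj.r]) (w := ([] : Word)) (Syn.priority p ⨟ Syn.lose1) Syn.lose1
  -- (E) the parity axiom
  | parity_even (p : Fin (M + 1)) (h : Even p.val) :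
      PGAeq (parityLHS M p) Syn.player0
  | parity_odd (p : Fin (M + 1)) (h : Odd p.val) :
      PGAeq (v := [Obj.r]) (w := [Obj.r, Obj.r]) (parityLHS M p) (Syn.start ⊠ Syn.id [Obj.r])
/-! ## Acyclic diagrams, layers and normal forms -/

/-- A diagram is *acyclic* if it is composed only of the generators
`player0, lose0, player1, lose1, merge, start, priority p` (together with
identities and wire crossings on `▶`-wires), i.e. it contains no `cup` or `cap`. -/
inductive Acyclic {M : ℕ} : {v w : Word} → Syn M v w → Prop where
  | id (k : ℕ) : Acyclic (Syn.id (rword k))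
  | symm (k j : ℕ) : Acyclic (Syn.symm (rword k) (rword j))
  | player0 : Acyclic Syn.player0
  | lose0 : Acyclic Syn.lose0
  | player1 : Acyclic Syn.player1
  | lose1 : Acyclic Syn.lose1
  | merge : Acyclic Syn.merge
  | start : Acyclic Syn.start
  | priority (p : Fin (M + 1)) : Acyclic (Syn.priority p)
  | comp {u v w : Word} {f : Syn M u v} {g : Syn M v w} :
      Acyclic f → Acyclic g → Acyclic (f ⨟ g)
  | tensor {u1 w1 u2 w2 : Word} {f : Syn M u1 w1} {g : Syn M u2 w2} :
      Acyclic f → Acyclic g → Acyclic (f ⊠ g)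

/-- A *layer* of generators from `S`: a diagram built only from generators in `S`
together with identities and wire crossings. -/
inductive Layer {M : ℕ} (S : {v w : Word} → Syn M v w → Prop) :
    {v w : Word} → Syn M v w → Prop where
  | base {v w : Word} {f : Syn M v w} : S f → Layer S f
  | id (k : ℕ) : Layer S (Syn.id (rword k))
  | symm (k j : ℕ) : Layer S (Syn.symm (rword k) (rword j))
  | comp {u v w : Word} {f : Syn M u v} {g : Syn M v w} :
      Layer S f → Layer S g → Layer S (f ⨟ g)
  | tensor {u1 w1 u2 w2 : Word} {f : Syn M u1 w1} {g : Syn M u2 w2} :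
      Layer S f → Layer S g → Layer S (f ⊠ g)

/-- The generators `player0`, `lose0`. -/
inductive Gen0 {M : ℕ} : {v w : Word} → Syn M v w → Prop where
  | player0 : Gen0 Syn.player0
  | lose0 : Gen0 Syn.lose0

/-- The generators `player1`, `lose1`. -/
inductive Gen1 {M : ℕ} : {v w : Word} → Syn M v w → Prop where
  | player1 : Gen1 Syn.player1
  | lose1 : Gen1 Syn.lose1

/-- The generators `priority p`. -/
inductive GenP {M : ℕ} : {v w : Word} → Syn M v w → Prop where
  | priority (p : Fin (M + 1)) : GenP (Syn.priority p)

/-- The generators `merge`, `start`. -/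
inductive GenM {M : ℕ} : {v w : Word} → Syn M v w → Prop where
  | merge : GenM Syn.merge
  | start : GenM Syn.start

/-- A diagram is in *normal form* when it factors into a layer of `player0/lose0`,
followed by a layer of `player1/lose1`, followed by a layer of priorities, followed
by a layer of `merge/start`. -/
def InNormalForm {M : ℕ} {v w : Word} (d : Syn M v w) : Prop :=
  ∃ (a b c : Word) (f1 : Syn M v a) (f2 : Syn M a b) (f3 : Syn M b c) (f4 : Syn M c w),
    Layer Gen0 f1 ∧ Layer Gen1 f2 ∧ Layer GenP f3 ∧ Layer GenM f4 ∧
    d = f1 ⨟ (f2 ⨟ (f3 ⨟ f4))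

theorem rword_append (a b : ℕ) : rword a ++ rword b = rword (a + b) :=
  (List.replicate_add a b Obj.r).symm

theorem mergeN_dom (k : ℕ) :
    [Obj.r] ++ ((rword k ++ [Obj.r]) ++ rword k) = rword ((k + 1) + (k + 1)) := by
  show rword 1 ++ ((rword k ++ rword 1) ++ rword k) = rword ((k + 1) + (k + 1))
  simp only [rword_append]
  exact congrArg rword (by omega)

theorem mergeN_mid (k : ℕ) :
    [Obj.r, Obj.r] ++ rword (k + k) = [Obj.r] ++ (([Obj.r] ++ rword k) ++ rword k) := by
  show rword 2 ++ rword (k + k) = rword 1 ++ ((rword 1 ++ rword k) ++ rword k)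
  simp only [rword_append]
  exact congrArg rword (by omega)

/-- The `k`-wire generalisation `merge_k : ▶^{2k} → ▶^k` of `merge`, merging the
`i`-th wire of the first group with the `i`-th wire of the second group. -/
def mergeN (M : ℕ) : (k : ℕ) → Syn M (rword (k + k)) (rword k)
  | 0 => Syn.id []
  | k + 1 =>
      Syn.castHom (mergeN_dom k) rfl
        ((Syn.id [Obj.r] ⊠ (Syn.symm (rword k) [Obj.r] ⊠ Syn.id (rword k)))
          ⨟ Syn.castHom (mergeN_mid k) rfl (Syn.merge ⊠ mergeN M k))

/-- The `k`-wire generalisation `start_k : ε → ▶^k` of `start`. -/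
def startN (M : ℕ) : (k : ℕ) → Syn M [] (rword k)
  | 0 => Syn.id []
  | k + 1 => Syn.start ⊠ startN M k

/-!
The tensor product is the coproduct of commutative monoid objects, so a homomorphism `▶^m ⟶ ▶^n`
for `merge` and `start` is the copairing of `m` homomorphisms `▶ ⟶ ▶^n`. The axioms make these a
commutative semiring under convolution: `player0` and `lose0` are addition and zero, `player1` and
`lose1` are multiplication and one. A copairing of sums of products of prioritised layers of
`merge` and `start` is in normal form up to `PGAeq`: copairing uses only `merge`, so copairings of
diagrams that factor into layers factor in the same way.

Identities have this shape, and precomposition with any generator keeps it: with the choices of the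
players because these copairings are closed under the semiring operations, and with `priority p`
because it induces a semiring endomorphism that sends prioritised layers to prioritised layers.
-/

open CategoryTheory MonoidalCategory MonObj

/-! ### Copairing into a monoid object -/

section Copair

variable {C : Type*} [Category C] [MonoidalCategory C] {X X' Y Y' V Z Z' : C} [MonObj Z]

/-- The copairing of two morphisms into a monoid object. Between commutative monoid objects it is
the one of a coproduct, `⊗` being the coproduct there. -/
def copair (f : X ⟶ Z) (g : Y ⟶ Z) : X ⊗ Y ⟶ Z := (f ⊗ₘ g) ≫ μ[Z]

theorem tensorHom_comp_copair (h : X' ⟶ X) (k : Y' ⟶ Y) (f : X ⟶ Z) (g : Y ⟶ Z) :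
    (h ⊗ₘ k) ≫ copair f g = copair (h ≫ f) (k ≫ g) := by
  simp [copair, tensorHom_comp_tensorHom_assoc]

theorem copair_comp [MonObj Z'] (f : X ⟶ Z) (g : Y ⟶ Z) (h : Z ⟶ Z') [IsMonHom h] :
    copair f g ≫ h = copair (f ≫ h) (g ≫ h) := by
  simp [copair, tensorHom_comp_tensorHom_assoc]

theorem associator_comp_copair (f : X ⟶ Z) (g : Y ⟶ Z) (h : V ⟶ Z) :
    (α_ X Y V).hom ≫ copair f (copair g h) = copair (copair f g) h := by
  simp only [copair, mon_tauto]

theorem copair_one_left (g : Y ⟶ Z) : copair η[Z] g = (λ_ Y).hom ≫ g := by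
  rw [copair, MonObj.one_mul_hom]

theorem copair_one_right (f : X ⟶ Z) : copair f η[Z] = (ρ_ X).hom ≫ f := by
  rw [copair, MonObj.mul_one_hom]

theorem mul_comp_eq_copair {A : C} [MonObj A] (a : A ⟶ Z) [IsMonHom a] :
    μ[A] ≫ a = copair a a :=
  IsMonHom.mul_hom a

end Copair

section BraidedCopair

variable {C : Type*} [Category C] [MonoidalCategory C] [BraidedCategory C]
variable {V W X Y Z : C} [MonObj Z]

theorem braiding_comp_copair [IsCommMonObj Z] (f : X ⟶ Z) (g : Y ⟶ Z) :
    (β_ Y X).hom ≫ copair f g = copair g f := by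
  rw [copair, copair, ← BraidedCategory.braiding_naturality_assoc, IsCommMonObj.mul_comm]

theorem tensorμ_comp_copair [IsCommMonObj Z] (f : W ⟶ Z) (f' : X ⟶ Z) (g : Y ⟶ Z) (g' : V ⟶ Z) :
    tensorμ W Y X V ≫ copair (copair f f') (copair g g') =
      copair (copair f g) (copair f' g') := by
  simp only [copair, ← tensorHom_comp_tensorHom, Category.assoc]
  rw [← tensorμ_natural_assoc, MonObj.mul_mul_mul_comm]

instance isMonHom_mul [IsCommMonObj Z] : IsMonHom μ[Z] where
  one_hom := by rw [MonObj.tensorObj.one_def]; simp [← unitors_equal]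
  mul_hom := by rw [MonObj.tensorObj.mul_def]; simp

instance isMonHom_one : IsMonHom η[Z] where
  one_hom := by simp
  mul_hom := by simp [← unitors_equal]

instance isMonHom_copair [IsCommMonObj Z] [MonObj X] [MonObj Y] (f : X ⟶ Z) (g : Y ⟶ Z)
    [IsMonHom f] [IsMonHom g] : IsMonHom (copair f g) := by
  unfold copair
  infer_instance

theorem id_eq_copair (X Y : C) [MonObj X] [MonObj Y] :
    𝟙 (X ⊗ Y) = copair ((ρ_ X).inv ≫ (𝟙 X ⊗ₘ η[Y])) ((λ_ Y).inv ≫ (η[X] ⊗ₘ 𝟙 Y)) := by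
  rw [copair, MonObj.tensorObj.mul_def, ← tensorHom_comp_tensorHom, Category.assoc,
    tensorμ_natural_assoc, tensorHom_comp_tensorHom, MonObj.mul_one_hom, MonObj.one_mul_hom]
  have braiding_unit : (β_ (𝟙_ C) (𝟙_ C)).hom = 𝟙 _ := by simp [← unitors_equal]
  simp only [tensorμ, braiding_unit]
  monoidal

theorem eq_copair [MonObj X] [MonObj Y] (h : X ⊗ Y ⟶ Z) [IsMonHom h] :
    h = copair ((ρ_ X).inv ≫ (𝟙 X ⊗ₘ η[Y]) ≫ h) ((λ_ Y).inv ≫ (η[X] ⊗ₘ 𝟙 Y) ≫ h) := by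
  simpa only [← id_eq_copair, Category.id_comp, Category.assoc] using
    copair_comp ((ρ_ X).inv ≫ (𝟙 X ⊗ₘ η[Y])) ((λ_ Y).inv ≫ (η[X] ⊗ₘ 𝟙 Y)) h

end BraidedCopair

/-! ### Convolution semirings -/

section Convolution

variable {C : Type*} [Category C] [MonoidalCategory C] {A Z : C} [MonObj Z] (c : ComonObj A)

/-- The convolution product of morphisms from a comonoid object to a monoid object. The comonoid
structure is explicit since it is used for two structures on one object. -/
def convolution (f g : A ⟶ Z) : A ⟶ Z := c.comul ≫ copair f g

theorem convolution_assoc (f g h : A ⟶ Z) :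
    convolution c (convolution c f g) h = convolution c f (convolution c g h) := by
  have left : copair (c.comul ≫ copair f g) h = c.comul ▷ A ≫ copair (copair f g) h := by
    rw [← tensorHom_id, tensorHom_comp_copair, Category.id_comp]
  have right : copair f (c.comul ≫ copair g h) = A ◁ c.comul ≫ copair f (copair g h) := by
    rw [← id_tensorHom, tensorHom_comp_copair, Category.id_comp]
  simp only [convolution, left, right, ← associator_comp_copair, ComonObj.comul_assoc_assoc]

theorem counit_convolution (f : A ⟶ Z) : convolution c (c.counit ≫ η[Z]) f = f := by
  have unit : copair (c.counit ≫ η[Z]) f = c.counit ▷ A ≫ copair η[Z] f := by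
    rw [← tensorHom_id, tensorHom_comp_copair, Category.id_comp]
  rw [convolution, unit, ComonObj.counit_comul_assoc, copair_one_left, Iso.inv_hom_id_assoc]

theorem convolution_comm [BraidedCategory C] [IsCommMonObj Z]
    (hc : c.comul ≫ (β_ A A).hom = c.comul) (f g : A ⟶ Z) :
    convolution c f g = convolution c g f := by
  rw [convolution, ← hc, Category.assoc, braiding_comp_copair, convolution]

theorem comp_convolution {B : C} (d : ComonObj B) {p : A ⟶ B}
    (hp : p ≫ d.comul = c.comul ≫ (p ⊗ₘ p)) (f g : B ⟶ Z) :
    p ≫ convolution d f g = convolution c (p ≫ f) (p ≫ g) := by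
  rw [convolution, reassoc_of% hp, tensorHom_comp_copair, convolution]

end Convolution

section Cosemiring

variable {C : Type*} [Category C] [MonoidalCategory C] [BraidedCategory C]

/-- A commutative semiring object in the opposite of the category of commutative monoid objects,
stated for the underlying monoid object: the structure on `A` that turns monoid maps `A ⟶ Z` into a
commutative semiring under convolution. Copairings take the place of projections, so the unit and
the multiplication of `A` appear in the laws `zero_distrib` and `add_distrib`. -/
class CosemiringObj (A : C) [MonObj A] where
  additive : ComonObj A
  multiplicative : ComonObj A
  isMonHom_additive_counit : IsMonHom additive.counit
  isMonHom_additive_comul : IsMonHom additive.comul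
  isMonHom_multiplicative_counit : IsMonHom multiplicative.counit
  isMonHom_multiplicative_comul : IsMonHom multiplicative.comul
  additive_comm : additive.comul ≫ (β_ A A).hom = additive.comul
  multiplicative_comm : multiplicative.comul ≫ (β_ A A).hom = multiplicative.comul
  zero_distrib : multiplicative.comul ≫ (additive.counit ⊗ₘ 𝟙 A) =
    additive.counit ≫ η[A] ≫ (λ_ A).inv
  add_distrib : multiplicative.comul ≫ (additive.comul ⊗ₘ 𝟙 A) =
    additive.comul ≫ (multiplicative.comul ⊗ₘ multiplicative.comul) ≫ tensorμ A A A A ≫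
      (𝟙 (A ⊗ A) ⊗ₘ μ[A])

namespace CosemiringObj

attribute [instance] isMonHom_additive_counit isMonHom_additive_comul isMonHom_multiplicative_counit
  isMonHom_multiplicative_comul

variable {A Z : C} [MonObj A] [CosemiringObj A] [MonObj Z]

instance isMonHom_convolution_additive [IsCommMonObj Z] (f g : A ⟶ Z) [IsMonHom f] [IsMonHom g] :
    IsMonHom (convolution (additive (A := A)) f g) := by
  unfold convolution
  infer_instance

instance isMonHom_convolution_multiplicative [IsCommMonObj Z] (f g : A ⟶ Z) [IsMonHom f]
    [IsMonHom g] : IsMonHom (convolution (multiplicative (A := A)) f g) := by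
  unfold convolution
  infer_instance

theorem zero_convolution (f : A ⟶ Z) [IsMonHom f] :
    convolution (multiplicative (A := A)) (additive.counit ≫ η[Z]) f = additive.counit ≫ η[Z] := by
  have unit : copair ((additive (A := A)).counit ≫ η[Z]) f =
      (additive.counit ⊗ₘ 𝟙 A) ≫ copair η[Z] f := by
    rw [tensorHom_comp_copair, Category.id_comp]
  rw [convolution, unit, reassoc_of% zero_distrib (A := A), copair_one_left, Iso.inv_hom_id_assoc,
    IsMonHom.one_hom]

theorem convolution_add_mul [IsCommMonObj Z] (f g h : A ⟶ Z) [IsMonHom h] :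
    convolution (multiplicative (A := A)) (convolution additive f g) h =
      convolution additive (convolution multiplicative f h) (convolution multiplicative g h) := by
  have sum : copair (convolution additive f g) h =
      (additive.comul ⊗ₘ 𝟙 A) ≫ copair (copair f g) h := by
    rw [tensorHom_comp_copair, Category.id_comp, convolution]
  have double : (𝟙 (A ⊗ A) ⊗ₘ μ[A]) ≫ copair (copair f g) h = copair (copair f g) (copair h h) := by
    rw [tensorHom_comp_copair, Category.id_comp, mul_comp_eq_copair]
  rw [convolution, sum, reassoc_of% add_distrib (A := A), double, tensorμ_comp_copair,
    tensorHom_comp_copair]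
  rfl

end CosemiringObj

/-- The homomorphisms of monoid objects from `A` to `Z`, the carrier of a convolution semiring. -/
@[ext]
structure MonMap (A Z : C) [MonObj A] [MonObj Z] where
  hom : A ⟶ Z
  isMonHom : IsMonHom hom

namespace MonMap

variable {A Z : C} [MonObj A] [MonObj Z]

attribute [instance] isMonHom

variable [CosemiringObj A]

open CosemiringObj

instance : Zero (MonMap A Z) := ⟨⟨additive.counit ≫ η[Z], inferInstance⟩⟩

instance : One (MonMap A Z) := ⟨⟨multiplicative.counit ≫ η[Z], inferInstance⟩⟩

theorem hom_zero : (0 : MonMap A Z).hom = additive.counit ≫ η[Z] := rfl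

theorem hom_one : (1 : MonMap A Z).hom = multiplicative.counit ≫ η[Z] := rfl

variable [IsCommMonObj Z]

instance : Add (MonMap A Z) := ⟨fun f g => ⟨convolution additive f.hom g.hom, inferInstance⟩⟩

instance : Mul (MonMap A Z) := ⟨fun f g => ⟨convolution multiplicative f.hom g.hom, inferInstance⟩⟩

instance : AddCommMonoid (MonMap A Z) where
  add_assoc _ _ _ := MonMap.ext (convolution_assoc _ _ _ _)
  add_comm _ _ := MonMap.ext (convolution_comm _ additive_comm _ _)
  zero_add _ := MonMap.ext (counit_convolution _ _)
  add_zero _ := MonMap.ext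
    ((convolution_comm _ additive_comm _ _).trans (counit_convolution _ _))
  nsmul := nsmulRec

instance : CommMonoid (MonMap A Z) where
  mul_assoc _ _ _ := MonMap.ext (convolution_assoc _ _ _ _)
  mul_comm _ _ := MonMap.ext (convolution_comm _ multiplicative_comm _ _)
  one_mul _ := MonMap.ext (counit_convolution _ _)
  mul_one _ := MonMap.ext
    ((convolution_comm _ multiplicative_comm _ _).trans (counit_convolution _ _))

instance : CommSemiring (MonMap A Z) where
  zero_mul f := MonMap.ext (zero_convolution f.hom)
  mul_zero f := (mul_comm f 0).trans (MonMap.ext (zero_convolution f.hom))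
  right_distrib f g h := MonMap.ext (convolution_add_mul f.hom g.hom h.hom)
  left_distrib f g h := by
    rw [mul_comm f, mul_comm f, mul_comm f]
    exact MonMap.ext (convolution_add_mul g.hom h.hom f.hom)

theorem hom_add (f g : MonMap A Z) : (f + g).hom = additive.comul ≫ copair f.hom g.hom := rfl

theorem hom_mul (f g : MonMap A Z) : (f * g).hom = multiplicative.comul ≫ copair f.hom g.hom := rfl

end MonMap

/-- The morphisms of monoid objects that preserve the cosemiring structure. -/
class IsCosemiringHom {A B : C} [MonObj A] [MonObj B] [CosemiringObj A] [CosemiringObj B]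
    (p : A ⟶ B) : Prop extends IsMonHom p where
  add_counit : p ≫ CosemiringObj.additive.counit = CosemiringObj.additive.counit
  add_comul : p ≫ CosemiringObj.additive.comul = CosemiringObj.additive.comul ≫ (p ⊗ₘ p)
  mul_counit : p ≫ CosemiringObj.multiplicative.counit = CosemiringObj.multiplicative.counit
  mul_comul : p ≫ CosemiringObj.multiplicative.comul = CosemiringObj.multiplicative.comul ≫ (p ⊗ₘ p)

/-- Precomposition with a homomorphism of cosemirings, as a map of convolution semirings. -/
def MonMap.precomp {A B : C} (Z : C) [MonObj A] [MonObj B] [MonObj Z] [IsCommMonObj Z]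
    [CosemiringObj A] [CosemiringObj B] (p : A ⟶ B) [IsCosemiringHom p] :
    MonMap B Z →+* MonMap A Z where
  toFun f := ⟨p ≫ f.hom, inferInstance⟩
  map_zero' := MonMap.ext ((reassoc_of% IsCosemiringHom.add_counit (p := p)) η[Z])
  map_one' := MonMap.ext ((reassoc_of% IsCosemiringHom.mul_counit (p := p)) η[Z])
  map_add' f g := MonMap.ext (comp_convolution _ _ IsCosemiringHom.add_comul f.hom g.hom)
  map_mul' f g := MonMap.ext (comp_convolution _ _ IsCosemiringHom.mul_comul f.hom g.hom)

end Cosemiring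

/-! ### Factorisations of sums of products -/

section Factorisation

variable {C : Type*} [Category C] {W₁ W₂ : MorphismProperty C} {X Y Z : C}

theorem comp_of_right [W₁.ContainsIdentities] {f : X ⟶ Y} (hf : W₂ f) : W₁.comp W₂ f :=
  ⟨⟨_, 𝟙 X, f, Category.id_comp f, W₁.id_mem X, hf⟩⟩

theorem comp_of_precomp [W₁.IsStableUnderComposition] {f : X ⟶ Y} {g : Y ⟶ Z} (hf : W₁ f)
    (hg : W₁.comp W₂ g) : W₁.comp W₂ (f ≫ g) := by
  obtain ⟨⟨_, i, p, rfl, hi, hp⟩⟩ := hg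
  exact ⟨⟨_, f ≫ i, p, Category.assoc f i p, W₁.comp_mem f i hf hi, hp⟩⟩

variable [MonoidalCategory C] [MonObj Z]

/-- Stability of a class of morphisms under copairing into the monoid object `Z`. -/
def CopairClosed (W : MorphismProperty C) (Z : C) [MonObj Z] : Prop :=
  ∀ ⦃X Y : C⦄ (f : X ⟶ Z) (g : Y ⟶ Z), W f → W g → W (copair f g)

theorem copairClosed_of_mul_mem [W₁.IsMonoidal] (hμ : W₁ μ[Z]) : CopairClosed W₁ Z :=
  fun _ _ f g hf hg => W₁.comp_mem _ _ (W₁.tensorHom_mem f g hf hg) hμ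

theorem CopairClosed.comp [W₁.IsMonoidal] (h : CopairClosed W₂ Z) :
    CopairClosed (W₁.comp W₂) Z := by
  rintro X Y _ _ ⟨⟨_, i, p, rfl, hi, hp⟩⟩ ⟨⟨_, j, q, rfl, hj, hq⟩⟩
  exact ⟨⟨_, i ⊗ₘ j, copair p q, tensorHom_comp_copair i j p q, W₁.tensorHom_mem i j hi hj,
    h p q hp hq⟩⟩

variable [BraidedCategory C] [IsCommMonObj Z] {A : C} [MonObj A] [CosemiringObj A]

open CosemiringObj

theorem comp_of_mem_submonoidClosure [W₁.IsMonoidal]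
    (hcounit : W₁ (multiplicative (A := A)).counit) (hcomul : W₁ (multiplicative (A := A)).comul)
    (hη : W₂ η[Z]) (hW₂ : CopairClosed W₂ Z) {S : Set (MonMap A Z)} (hS : ∀ f ∈ S, W₂ f.hom)
    {f : MonMap A Z} (hf : f ∈ Submonoid.closure S) : W₁.comp W₂ f.hom := by
  induction hf using Submonoid.closure_induction with
  | mem f hf => exact comp_of_right (hS f hf)
  | one => exact ⟨⟨_, _, _, rfl, hcounit, hη⟩⟩
  | mul f g _ _ hf hg => exact comp_of_precomp hcomul (hW₂.comp _ _ hf hg)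

theorem comp_of_mem_addSubmonoidClosure [W₁.IsMonoidal]
    (hcounit : W₁ (additive (A := A)).counit) (hcomul : W₁ (additive (A := A)).comul)
    (hη : W₂ η[Z]) (hW₂ : CopairClosed W₂ Z) {S : Set (MonMap A Z)} (hS : ∀ f ∈ S, W₂ f.hom)
    {f : MonMap A Z} (hf : f ∈ AddSubmonoid.closure S) : W₁.comp W₂ f.hom := by
  induction hf using AddSubmonoid.closure_induction with
  | mem f hf => exact comp_of_right (hS f hf)
  | zero => exact ⟨⟨_, _, _, rfl, hcounit, hη⟩⟩
  | add f g _ _ hf hg => exact comp_of_precomp hcomul (hW₂.comp _ _ hf hg)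

end Factorisation

/-! ### The symmetric monoidal category of `▶`-words -/

/-- A word all of whose letters are `▶`. -/
def IsRight (w : Word) : Prop := ∀ x ∈ w, x = Obj.r

theorem isRight_rword (k : ℕ) : IsRight (rword k) := fun _ => List.eq_of_mem_replicate

theorem IsRight.eq_rword {w : Word} (hw : IsRight w) : w = rword w.length :=
  List.eq_replicate_iff.2 ⟨rfl, hw⟩

theorem isRight_append {u w : Word} : IsRight (u ++ w) ↔ IsRight u ∧ IsRight w :=
  List.forall_mem_append

theorem IsRight.tail {x : Obj} {u : Word} (h : IsRight (x :: u)) : IsRight u :=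
  (List.forall_mem_cons.1 h).2

/-- Objects of the category of `▶`-words and diagrams modulo `PGAeq`. The parameter `M` bounds the
priorities in the morphisms. -/
@[ext]
structure Wires (M : ℕ) where
  word : Word
  isRight : IsRight word

/-- `PGAeq` as a setoid on the diagrams of a given type. -/
def pgaSetoid (M : ℕ) (u w : Word) : Setoid (Syn M u w) where
  r := PGAeq
  iseqv := ⟨PGAeq.refl, PGAeq.symm_rel, PGAeq.trans⟩

instance (M : ℕ) : Category (Wires M) where
  Hom X Y := Quotient (pgaSetoid M X.word Y.word)
  id X := Quotient.mk _ (Syn.id X.word)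
  comp := Quotient.map₂ Syn.comp fun _ _ h _ _ h' => PGAeq.comp_congr h h'
  id_comp := by rintro _ _ ⟨f⟩; exact Quotient.sound (PGAeq.id_comp f)
  comp_id := by rintro _ _ ⟨f⟩; exact Quotient.sound (PGAeq.comp_id f)
  assoc := by rintro _ _ _ _ ⟨f⟩ ⟨g⟩ ⟨h⟩; exact Quotient.sound (PGAeq.comp_assoc f g h)

instance (M : ℕ) : MonoidalCategoryStruct (Wires M) where
  tensorObj X Y := ⟨X.word ++ Y.word, isRight_append.2 ⟨X.isRight, Y.isRight⟩⟩
  tensorUnit := ⟨[], isRight_rword 0⟩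
  tensorHom := Quotient.map₂ Syn.tensor fun _ _ h _ _ h' => PGAeq.tensor_congr h h'
  whiskerLeft X _ _ :=
    Quotient.map (Syn.tensor (Syn.id X.word)) fun _ _ => PGAeq.tensor_congr (PGAeq.refl _)
  whiskerRight f Y :=
    Quotient.map (fun f => Syn.tensor f (Syn.id Y.word))
      (fun _ _ h => PGAeq.tensor_congr h (PGAeq.refl _)) f
  associator _ _ _ := eqToIso (Wires.ext (List.append_assoc _ _ _))
  leftUnitor _ := eqToIso (Wires.ext (List.nil_append _))
  rightUnitor _ := eqToIso (Wires.ext (List.append_nil _))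

section QuotientCategory

variable {M : ℕ} {X X' Y Y' Z Z' : Wires M}

/-- The class of a diagram modulo `PGAeq`. -/
def homMk (X Y : Wires M) (f : Syn M X.word Y.word) : X ⟶ Y := Quotient.mk _ f

theorem homMk_eq_iff {f g : Syn M X.word Y.word} : homMk X Y f = homMk X Y g ↔ PGAeq f g :=
  Quotient.eq (r := pgaSetoid M X.word Y.word)

theorem homMk_castHom (hX : X = X') (hY : Y = Y') (f : Syn M X.word Y.word) :
    homMk X' Y' (Syn.castHom (congrArg Wires.word hX) (congrArg Wires.word hY) f) =
      eqToHom hX.symm ≫ homMk X Y f ≫ eqToHom hY := by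
  subst hX hY
  simp [Syn.castHom]

theorem id_tensorHom_id_eq (X Y : Wires M) : 𝟙 X ⊗ₘ 𝟙 Y = 𝟙 (X ⊗ Y) :=
  homMk_eq_iff.2 (PGAeq.tensor_id X.word Y.word)

theorem eqToHom_tensorHom_eqToHom (hX : X = X') (hY : Y = Y') :
    eqToHom hX ⊗ₘ eqToHom hY = eqToHom (congrArg₂ (· ⊗ ·) hX hY) := by
  subst hX hY
  exact id_tensorHom_id_eq X Y

theorem tensorHom_comp_tensorHom_eq (f : X ⟶ Y) (g : Y ⟶ Z) (f' : X' ⟶ Y') (g' : Y' ⟶ Z') :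
    (f ⊗ₘ f') ≫ (g ⊗ₘ g') = (f ≫ g) ⊗ₘ (f' ≫ g') := by
  obtain ⟨f⟩ := f; obtain ⟨g⟩ := g; obtain ⟨f'⟩ := f'; obtain ⟨g'⟩ := g'
  exact (Quotient.sound (PGAeq.interchange f g f' g')).symm

theorem associator_eq (X Y Z : Wires M) :
    (α_ X Y Z).hom = eqToHom (Wires.ext (List.append_assoc ..)) := rfl

theorem leftUnitor_eq (X : Wires M) :
    (λ_ X).hom = eqToHom (Wires.ext (List.nil_append _)) := rfl

theorem leftUnitor_inv_eq (X : Wires M) :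
    (λ_ X).inv = eqToHom (Wires.ext (List.nil_append _).symm) := rfl

theorem rightUnitor_inv_eq (X : Wires M) :
    (ρ_ X).inv = eqToHom (Wires.ext (List.append_nil _).symm) := rfl

theorem rightUnitor_eq (X : Wires M) :
    (ρ_ X).hom = eqToHom (Wires.ext (List.append_nil _)) := rfl

theorem homMk_comp_eqToHom {f : Syn M X.word Y.word} {g : Syn M X'.word Y'.word} (hX : X = X')
    (hY : Y = Y')
    (h : PGAeq (Syn.castHom (congrArg Wires.word hX) (congrArg Wires.word hY) f) g) :
    homMk X Y f ≫ eqToHom hY = eqToHom hX ≫ homMk X' Y' g := by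
  rw [← homMk_eq_iff.2 h, homMk_castHom hX hY, eqToHom_trans_assoc, eqToHom_refl, Category.id_comp]

theorem tensorHom_comp_associator (f : X ⟶ X') (g : Y ⟶ Y') (h : Z ⟶ Z') :
    ((f ⊗ₘ g) ⊗ₘ h) ≫ (α_ X' Y' Z').hom = (α_ X Y Z).hom ≫ (f ⊗ₘ g ⊗ₘ h) := by
  obtain ⟨f⟩ := f; obtain ⟨g⟩ := g; obtain ⟨h⟩ := h
  exact homMk_comp_eqToHom (X := (X ⊗ Y) ⊗ Z) (X' := X ⊗ Y ⊗ Z) (Y := (X' ⊗ Y') ⊗ Z')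
    (Y' := X' ⊗ Y' ⊗ Z') (Wires.ext (List.append_assoc ..)) (Wires.ext (List.append_assoc ..))
    (PGAeq.tensor_assoc f g h)

theorem tensorHom_comp_rightUnitor (f : X ⟶ Y) :
    (f ⊗ₘ 𝟙 (𝟙_ (Wires M))) ≫ (ρ_ Y).hom = (ρ_ X).hom ≫ f := by
  obtain ⟨f⟩ := f
  exact homMk_comp_eqToHom (X := X ⊗ 𝟙_ _) (Y := Y ⊗ 𝟙_ _) (Wires.ext (List.append_nil _))
    (Wires.ext (List.append_nil _)) (PGAeq.tensor_nil f)

/-- The crossing of two bundles of wires. -/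
def crossing (X Y : Wires M) : X ⊗ Y ≅ Y ⊗ X where
  hom := homMk (X ⊗ Y) (Y ⊗ X) (Syn.symm X.word Y.word)
  inv := homMk (Y ⊗ X) (X ⊗ Y) (Syn.symm Y.word X.word)
  hom_inv_id := homMk_eq_iff.2 (PGAeq.swap_inv X.word Y.word)
  inv_hom_id := homMk_eq_iff.2 (PGAeq.swap_inv Y.word X.word)

theorem tensorHom_comp_crossing (f : X ⟶ X') (g : Y ⟶ Y') :
    (f ⊗ₘ g) ≫ (crossing X' Y').hom = (crossing X Y).hom ≫ (g ⊗ₘ f) := by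
  obtain ⟨f⟩ := f; obtain ⟨g⟩ := g
  exact homMk_eq_iff.2 (PGAeq.swap_nat f g)

theorem crossing_hexagon (X Y Z : Wires M) :
    (α_ X Y Z).hom ≫ (crossing X (Y ⊗ Z)).hom ≫ (α_ Y Z X).hom =
      ((crossing X Y).hom ⊗ₘ 𝟙 Z) ≫ (α_ Y X Z).hom ≫ (𝟙 Y ⊗ₘ (crossing X Z).hom) := by
  have second := homMk_castHom (X := Y ⊗ X ⊗ Z) (X' := (Y ⊗ X) ⊗ Z) (Y := Y ⊗ Z ⊗ X)
    (Wires.ext (List.append_assoc ..).symm) rfl (Syn.id Y.word ⊠ Syn.symm X.word Z.word)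
  have both := homMk_castHom (X := (X ⊗ Y) ⊗ Z) (X' := X ⊗ Y ⊗ Z) (Y := Y ⊗ Z ⊗ X)
    (Y' := (Y ⊗ Z) ⊗ X) (Wires.ext (List.append_assoc ..)) (Wires.ext (List.append_assoc ..).symm)
    ((Syn.symm X.word Y.word ⊠ Syn.id Z.word) ⨟
      Syn.castHom (List.append_assoc Y.word X.word Z.word).symm rfl
        (Syn.id Y.word ⊠ Syn.symm X.word Z.word))
  have hexagon : (crossing X (Y ⊗ Z)).hom = (α_ X Y Z).inv ≫
      (((crossing X Y).hom ⊗ₘ 𝟙 Z) ≫ homMk ((Y ⊗ X) ⊗ Z) (Y ⊗ Z ⊗ X) _) ≫ (α_ Y Z X).inv :=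
    (homMk_eq_iff.2 (PGAeq.hexagon X.word Y.word Z.word)).trans both
  rw [hexagon, second]
  simp only [eqToHom_refl, Category.comp_id, Category.assoc, Iso.inv_hom_id, Iso.hom_inv_id_assoc]
  rfl

theorem crossing_congr_right (X : Wires M) (hY : Y = Y') :
    (crossing X Y).hom = eqToHom (congrArg (X ⊗ ·) hY) ≫ (crossing X Y').hom ≫
      eqToHom (congrArg (· ⊗ X) hY.symm) := by
  subst hY
  simp

-- The hexagon with two empty bundles reads `c = c ≫ (𝟙 ⊗ c)`, where `c` is invertible.
theorem id_tensorHom_crossing_unit (X : Wires M) :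
    𝟙 (𝟙_ (Wires M)) ⊗ₘ (crossing X (𝟙_ (Wires M))).hom =
      𝟙 (𝟙_ (Wires M)) ⊗ₘ ((ρ_ X).hom ≫ (λ_ X).inv) := by
  have hexagon := crossing_hexagon X (𝟙_ _) (𝟙_ _)
  have right_unit := tensorHom_comp_rightUnitor (crossing X (𝟙_ (Wires M))).hom
  rw [← Iso.eq_comp_inv, Category.assoc] at right_unit
  rw [crossing_congr_right X (Y := 𝟙_ (Wires M) ⊗ 𝟙_ (Wires M)) (Y' := 𝟙_ (Wires M)) rfl,
    right_unit] at hexagon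
  simp only [associator_eq, rightUnitor_eq, rightUnitor_inv_eq, eqToHom_trans_assoc,
    Category.assoc, cancel_epi, eqToHom_trans] at hexagon
  rw [eq_comm, eqToHom_comp_iff, eqToHom_trans] at hexagon
  rw [hexagon, rightUnitor_eq, leftUnitor_inv_eq, eqToHom_trans, ← eqToHom_refl (𝟙_ (Wires M)) rfl,
    eqToHom_tensorHom_eqToHom]

theorem tensorHom_unit_injective :
    Function.Injective fun f : X ⟶ Y => f ⊗ₘ 𝟙 (𝟙_ (Wires M)) := by
  intro f g h
  rw [← cancel_epi (ρ_ X).hom, ← tensorHom_comp_rightUnitor, ← tensorHom_comp_rightUnitor]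
  exact congrArg (· ≫ (ρ_ Y).hom) h

theorem crossing_unit_right (X : Wires M) :
    (crossing X (𝟙_ _)).hom = (ρ_ X).hom ≫ (λ_ X).inv := by
  apply tensorHom_unit_injective
  rw [← cancel_epi (crossing (𝟙_ _) (X ⊗ 𝟙_ _)).hom, ← tensorHom_comp_crossing,
    ← tensorHom_comp_crossing, id_tensorHom_crossing_unit]

theorem crossing_unit_left (X : Wires M) :
    (crossing (𝟙_ _) X).hom = (λ_ X).hom ≫ (ρ_ X).inv := by
  rw [← cancel_epi (crossing X (𝟙_ _)).hom]
  refine (crossing X (𝟙_ _)).hom_inv_id.trans ?_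
  rw [crossing_unit_right, Category.assoc, Iso.inv_hom_id_assoc, Iso.hom_inv_id]

theorem tensorHom_comp_leftUnitor (f : X ⟶ Y) :
    (𝟙 (𝟙_ (Wires M)) ⊗ₘ f) ≫ (λ_ Y).hom = (λ_ X).hom ≫ f := by
  have natural := tensorHom_comp_crossing (𝟙 (𝟙_ (Wires M))) f
  rw [crossing_unit_left, crossing_unit_left, Category.assoc] at natural
  rw [← cancel_mono (ρ_ Y).inv, Category.assoc, natural, Category.assoc, Iso.cancel_iso_hom_left,
    Iso.eq_comp_inv, Category.assoc, tensorHom_comp_rightUnitor, Iso.inv_hom_id_assoc]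

end QuotientCategory

instance (M : ℕ) : MonoidalCategory (Wires M) :=
  MonoidalCategory.ofTensorHom
    (id_tensorHom_id := id_tensorHom_id_eq)
    (tensorHom_comp_tensorHom := fun f f' g g' => tensorHom_comp_tensorHom_eq f g f' g')
    (associator_naturality := tensorHom_comp_associator)
    (leftUnitor_naturality := tensorHom_comp_leftUnitor)
    (rightUnitor_naturality := tensorHom_comp_rightUnitor)
    (pentagon := fun W X Y Z => by
      rw [← eqToHom_refl Z rfl, ← eqToHom_refl W rfl]
      simp only [associator_eq, eqToHom_tensorHom_eqToHom, eqToHom_trans])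
    (triangle := fun X Y => by
      rw [← eqToHom_refl X rfl, ← eqToHom_refl Y rfl]
      simp only [associator_eq, leftUnitor_eq, rightUnitor_eq, eqToHom_tensorHom_eqToHom,
        eqToHom_trans])

instance (M : ℕ) : BraidedCategory (Wires M) where
  braiding := crossing
  braiding_naturality_right X _ _ f := tensorHom_comp_crossing (𝟙 X) f
  braiding_naturality_left f Z := tensorHom_comp_crossing f (𝟙 Z)
  hexagon_forward X Y Z := crossing_hexagon X Y Z
  hexagon_reverse X Y Z := by
    have crossing_inv (A B : Wires M) : (crossing A B).inv = (crossing B A).hom := rfl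
    rw [← IsIso.inv_eq_inv]
    simpa [crossing_inv] using crossing_hexagon Z X Y

instance (M : ℕ) : SymmetricCategory (Wires M) where
  symmetry X Y := (crossing X Y).hom_inv_id

/-! ### Factorisations into layers -/

section Layers

variable {M : ℕ}

/-- The classes of the layers of generators from `G`. -/
def layers (G : {v w : Word} → Syn M v w → Prop) : MorphismProperty (Wires M) :=
  fun X Y f => ∃ d : Syn M X.word Y.word, Layer G d ∧ homMk X Y d = f

variable {G : {v w : Word} → Syn M v w → Prop}

theorem homMk_mem_layers {X Y : Wires M} {d : Syn M X.word Y.word} (hd : G d) :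
    layers G (homMk X Y d) :=
  ⟨d, .base hd, rfl⟩

theorem layer_id {w : Word} (hw : IsRight w) : Layer G (Syn.id (M := M) w) := by
  rw [hw.eq_rword]
  exact .id _

theorem layer_symm {v w : Word} (hv : IsRight v) (hw : IsRight w) :
    Layer G (Syn.symm (M := M) v w) := by
  rw [hv.eq_rword, hw.eq_rword]
  exact .symm _ _

instance : (layers G).IsMultiplicative where
  id_mem X := ⟨_, layer_id X.isRight, rfl⟩
  comp_mem := by
    rintro _ _ _ _ _ ⟨f, hf, rfl⟩ ⟨g, hg, rfl⟩
    exact ⟨f ⨟ g, hf.comp hg, rfl⟩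

instance : (layers G).IsMonoidal := .mk' _ <| by
  rintro _ _ _ _ _ _ ⟨f, hf, rfl⟩ ⟨g, hg, rfl⟩
  exact ⟨f ⊠ g, hf.tensor hg, rfl⟩

theorem braiding_mem_layers (X Y : Wires M) : layers G (β_ X Y).hom :=
  ⟨_, layer_symm X.isRight Y.isRight, rfl⟩

theorem tensorμ_mem_layers (V W X Y : Wires M) : layers G (tensorμ V W X Y) := by
  have assoc (X Y V : Wires M) : layers G (α_ X Y V).hom :=
    MorphismProperty.ContainsIdentities.eqToHom _ (Wires.ext (List.append_assoc ..))
  have assoc_inv (X Y V : Wires M) : layers G (α_ X Y V).inv :=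
    MorphismProperty.ContainsIdentities.eqToHom _ (Wires.ext (List.append_assoc ..).symm)
  have swap : layers G ((β_ W X).hom ▷ Y) :=
    (layers G).whiskerRight_mem _ (braiding_mem_layers W X) Y
  refine (layers G).comp_mem _ _ (assoc _ _ _) <|
    (layers G).comp_mem _ _ ?_ <| (layers G).comp_mem _ _ ?_ <| (layers G).comp_mem _ _ ?_ <|
      assoc_inv _ _ _
  · exact (layers G).whiskerLeft_mem _ _ (assoc_inv _ _ _)
  · exact (layers G).whiskerLeft_mem _ _ swap
  · exact (layers G).whiskerLeft_mem _ _ (assoc _ _ _)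

end Layers

/-! ### The wire as a cosemiring object -/

section Wire

variable {M : ℕ}

/-- A single wire `▶`. -/
def wire (M : ℕ) : Wires M := ⟨[Obj.r], isRight_rword 1⟩

instance : MonObj (wire M) where
  one := homMk (𝟙_ _) (wire M) Syn.start
  mul := homMk (wire M ⊗ wire M) (wire M) Syn.merge
  one_mul := homMk_eq_iff.2 PGAeq.B3l
  mul_one := homMk_eq_iff.2 PGAeq.B3r
  mul_assoc := (homMk_eq_iff.2 PGAeq.B1).trans (Category.id_comp _).symm

instance : IsCommMonObj (wire M) where
  mul_comm := homMk_eq_iff.2 PGAeq.B2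

theorem tensorμ_eq_whiskerRight {C : Type*} [Category C] [MonoidalCategory C] [BraidedCategory C]
    (V W X Y : C) : tensorμ V W X Y = (α_ (V ⊗ W) X Y).inv ≫ ((α_ V W X).hom ≫
      V ◁ (β_ W X).hom ≫ (α_ V X W).inv) ▷ Y ≫ (α_ (V ⊗ X) W Y).hom := by
  simp only [tensorμ]
  monoidal

theorem tensorμ_wire : tensorμ (wire M) (wire M) (wire M) (wire M) =
    homMk ((wire M ⊗ wire M) ⊗ wire M ⊗ wire M) ((wire M ⊗ wire M) ⊗ wire M ⊗ wire M)
      (Syn.tensor (u1 := [.r, .r, .r]) (w1 := [.r, .r, .r])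
        (Syn.id [.r] ⊠ Syn.symm [.r] [.r]) (Syn.id [.r])) := by
  have middle : (α_ (wire M) (wire M) (wire M)).hom ≫ (wire M ◁ (β_ (wire M) (wire M)).hom) ≫
      (α_ (wire M) (wire M) (wire M)).inv = wire M ◁ (β_ (wire M) (wire M)).hom :=
    (Category.id_comp _).trans (Category.comp_id _)
  rw [tensorμ_eq_whiskerRight, middle]
  exact (Category.id_comp _).trans (Category.comp_id _)

/-- The comonoid of the choices of player 0, the addition of the cosemiring `wire M`. -/
abbrev choice0 (M : ℕ) : ComonObj (wire M) where
  counit := homMk (wire M) (𝟙_ _) Syn.lose0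
  comul := homMk (wire M) (wire M ⊗ wire M) Syn.player0
  counit_comul := homMk_eq_iff.2 PGAeq.B6r
  comul_counit := homMk_eq_iff.2 PGAeq.B6l
  comul_assoc := (homMk_eq_iff.2 PGAeq.B4).symm.trans
    (congrArg (homMk (wire M) (wire M ⊗ wire M) Syn.player0 ≫ ·)
      (Category.comp_id (homMk (wire M) (wire M ⊗ wire M) Syn.player0 ▷ wire M)).symm)

/-- The comonoid of the choices of player 1, the multiplication of the cosemiring `wire M`. -/
abbrev choice1 (M : ℕ) : ComonObj (wire M) where
  counit := homMk (wire M) (𝟙_ _) Syn.lose1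
  comul := homMk (wire M) (wire M ⊗ wire M) Syn.player1
  counit_comul := homMk_eq_iff.2 PGAeq.B9r
  comul_counit := homMk_eq_iff.2 PGAeq.B9l
  comul_assoc := (homMk_eq_iff.2 PGAeq.B7).symm.trans
    (congrArg (homMk (wire M) (wire M ⊗ wire M) Syn.player1 ≫ ·)
      (Category.comp_id (homMk (wire M) (wire M ⊗ wire M) Syn.player1 ▷ wire M)).symm)

instance : CosemiringObj (wire M) where
  additive := choice0 M
  multiplicative := choice1 M
  isMonHom_additive_counit :=
    { one_hom := homMk_eq_iff.2 PGAeq.B14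
      mul_hom := (homMk_eq_iff.2 PGAeq.B11).trans (Category.comp_id _).symm }
  isMonHom_additive_comul :=
    { one_hom := (homMk_eq_iff.2 PGAeq.B12).trans (Category.id_comp _).symm
      mul_hom := by
        rw [MonObj.tensorObj.mul_def, tensorμ_wire]
        exact homMk_eq_iff.2 (PGAeq.B10.trans (PGAeq.comp_assoc _ _ _)) }
  isMonHom_multiplicative_counit :=
    { one_hom := homMk_eq_iff.2 PGAeq.B15
      mul_hom := (homMk_eq_iff.2 PGAeq.B19).trans (Category.comp_id _).symm }
  isMonHom_multiplicative_comul :=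
    { one_hom := (homMk_eq_iff.2 PGAeq.B13).trans (Category.id_comp _).symm
      mul_hom := by
        rw [MonObj.tensorObj.mul_def, tensorμ_wire]
        exact homMk_eq_iff.2 (PGAeq.B18.trans (PGAeq.comp_assoc _ _ _)) }
  additive_comm := homMk_eq_iff.2 PGAeq.B5
  multiplicative_comm := homMk_eq_iff.2 PGAeq.B8
  zero_distrib := (homMk_eq_iff.2 PGAeq.B23).trans
    (congrArg (homMk (wire M) (𝟙_ _) Syn.lose0 ≫ ·) (Category.comp_id η[wire M]).symm)
  add_distrib := by
    rw [tensorμ_wire, ← id_tensorHom_id_eq]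
    exact homMk_eq_iff.2
      (PGAeq.B22.trans ((PGAeq.comp_assoc _ _ _).trans (PGAeq.comp_assoc _ _ _)))

/-- The class of the diagram `priority p`. -/
def prioritise (p : Fin (M + 1)) : wire M ⟶ wire M := homMk (wire M) (wire M) (Syn.priority p)

theorem prioritise_zero : prioritise (0 : Fin (M + 1)) = 𝟙 (wire M) := homMk_eq_iff.2 PGAeq.C4

theorem prioritise_comp (p q : Fin (M + 1)) :
    prioritise p ≫ prioritise q = prioritise (max p q) :=
  homMk_eq_iff.2 (PGAeq.C3 p q)

instance (p : Fin (M + 1)) : IsCosemiringHom (prioritise p) where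
  one_hom := homMk_eq_iff.2 (PGAeq.C2 p)
  mul_hom := homMk_eq_iff.2 (PGAeq.C1 p).symm_rel
  add_counit := homMk_eq_iff.2 (PGAeq.D2 p)
  add_comul := homMk_eq_iff.2 (PGAeq.D1 p)
  mul_counit := homMk_eq_iff.2 (PGAeq.D4 p)
  mul_comul := homMk_eq_iff.2 (PGAeq.D3 p)

end Wire

/-! ### Normal morphisms -/

section Normal

variable {M : ℕ}

@[elab_as_elim]
theorem Wires.induction {P : Wires M → Prop} (unit : P (𝟙_ (Wires M)))
    (wire_tensor : ∀ X, P X → P (wire M ⊗ X)) (X : Wires M) : P X := by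
  obtain ⟨w, hw⟩ := X
  induction w with
  | nil => exact unit
  | cons x u ih =>
    obtain rfl : x = Obj.r := hw x List.mem_cons_self
    exact wire_tensor ⟨u, hw.tail⟩ (ih hw.tail)

/-- A commutative monoid structure whose operations are layers of `merge` and `start`. -/
class MergeObj (Z : Wires M) extends MonObj Z, IsCommMonObj Z where
  mul_mem_layers : layers GenM mul
  one_mem_layers : layers GenM one

instance : MergeObj (𝟙_ (Wires M)) where
  mul_mem_layers := (layers GenM).id_mem (𝟙_ (Wires M))
  one_mem_layers := (layers GenM).id_mem (𝟙_ (Wires M))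

instance : MergeObj (wire M) where
  mul_mem_layers := homMk_mem_layers GenM.merge
  one_mem_layers := homMk_mem_layers GenM.start

instance (X Y : Wires M) [MergeObj X] [MergeObj Y] : MergeObj (X ⊗ Y) where
  mul_mem_layers := (layers GenM).comp_mem _ _ (tensorμ_mem_layers X Y X Y)
    ((layers GenM).tensorHom_mem _ _ MergeObj.mul_mem_layers MergeObj.mul_mem_layers)
  one_mem_layers := (layers GenM).comp_mem _ _ ((layers GenM).id_mem (𝟙_ (Wires M)))
    ((layers GenM).tensorHom_mem _ _ MergeObj.one_mem_layers MergeObj.one_mem_layers)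

variable {X Y Z : Wires M} [MonObj Z] [IsCommMonObj Z]

/-- The prioritised layers of `merge` and `start` on a single wire. -/
def literals (Z : Wires M) [MonObj Z] : Set (MonMap (wire M) Z) :=
  {f | ∃ (p : Fin (M + 1)) (h : MonMap (wire M) Z), layers GenM h.hom ∧
    prioritise p ≫ h.hom = f.hom}

/-- The sums of products of literals, `player0` being the addition and `player1` the
multiplication. -/
def disjunctiveForms (Z : Wires M) [MonObj Z] [IsCommMonObj Z] : Subsemiring (MonMap (wire M) Z) :=
  Subsemiring.closure (literals Z)

/-- `IsNormal`, by recursion on the word of the domain. -/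
def IsNormalOn (Z : Wires M) [MonObj Z] [IsCommMonObj Z] :
    (w : Word) → (hw : IsRight w) → ((⟨w, hw⟩ : Wires M) ⟶ Z) → Prop
  | [], _, h => h = η[Z]
  | Obj.r :: u, hw, h => ∃ a ∈ disjunctiveForms Z, ∃ g : (⟨u, hw.tail⟩ : Wires M) ⟶ Z,
      IsNormalOn Z u hw.tail g ∧ h = copair a.hom g
  | Obj.l :: _, _, _ => False

/-- The copairings of one disjunctive form for each wire of the domain. -/
def IsNormal (h : X ⟶ Z) : Prop := IsNormalOn Z X.word X.isRight h

theorem isNormal_unit_iff {h : 𝟙_ (Wires M) ⟶ Z} : IsNormal h ↔ h = η[Z] := Iff.rfl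

theorem isNormal_wire_tensor_iff {h : wire M ⊗ X ⟶ Z} :
    IsNormal h ↔ ∃ a ∈ disjunctiveForms Z, ∃ g : X ⟶ Z, IsNormal g ∧ h = copair a.hom g := Iff.rfl

theorem isNormal_eqToHom_comp_iff (e : X = Y) {h : Y ⟶ Z} :
    IsNormal (eqToHom e ≫ h) ↔ IsNormal h := by
  subst e
  rw [eqToHom_refl, Category.id_comp]

theorem isNormal_wire_iff {h : wire M ⟶ Z} :
    IsNormal h ↔ ∃ a ∈ disjunctiveForms Z, a.hom = h := by
  have unitor := isNormal_eqToHom_comp_iff (X := wire M ⊗ 𝟙_ _) (Wires.ext (List.append_nil _))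
    (h := h)
  rw [← unitor, ← rightUnitor_eq, isNormal_wire_tensor_iff]
  simp only [isNormal_unit_iff, exists_eq_left, copair_one_right, cancel_epi, eq_comm (a := h)]

theorem isNormal_wire_tensor_wire_iff {h : wire M ⊗ wire M ⟶ Z} : IsNormal h ↔
    ∃ a ∈ disjunctiveForms Z, ∃ b ∈ disjunctiveForms Z, h = copair a.hom b.hom := by
  simp only [isNormal_wire_tensor_iff, isNormal_wire_iff, exists_exists_and_eq_and]

theorem isNormal_tensor_iff {h : X ⊗ Y ⟶ Z} :
    IsNormal h ↔ ∃ (f : X ⟶ Z) (g : Y ⟶ Z), IsNormal f ∧ IsNormal g ∧ h = copair f g := by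
  induction X using Wires.induction with
  | unit =>
    have unitor := isNormal_eqToHom_comp_iff (X := Y) (Y := 𝟙_ _ ⊗ Y)
      (Wires.ext (List.nil_append _).symm) (h := h)
    rw [← unitor, ← leftUnitor_inv_eq]
    simp only [isNormal_unit_iff, exists_and_left, exists_eq_left, copair_one_left,
      ← Iso.inv_comp_eq, exists_eq_right']
  | wire_tensor X ih =>
    have assoc_iff (a : wire M ⟶ Z) (f : X ⟶ Z) (g : Y ⟶ Z) :
        (α_ (wire M) X Y).inv ≫ h = copair a (copair f g) ↔ h = copair (copair a f) g := by
      rw [Iso.inv_comp_eq, associator_comp_copair]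
    have associator : IsNormal ((α_ (wire M) X Y).inv ≫ h) ↔ IsNormal h :=
      isNormal_eqToHom_comp_iff (X := wire M ⊗ X ⊗ Y) (Y := (wire M ⊗ X) ⊗ Y)
        (Wires.ext (List.append_assoc ..).symm)
    rw [← associator]
    simp only [isNormal_wire_tensor_iff, ih]
    constructor
    · rintro ⟨a, ha, _, ⟨f, g, hf, hg, rfl⟩, hh⟩
      exact ⟨_, g, ⟨a, ha, f, hf, rfl⟩, hg, (assoc_iff _ _ _).1 hh⟩
    · rintro ⟨_, g, ⟨a, ha, f, hf, rfl⟩, hg, hh⟩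
      exact ⟨a, ha, _, ⟨f, g, hf, hg, rfl⟩, (assoc_iff _ _ _).2 hh⟩

theorem isNormal_copair {f : X ⟶ Z} {g : Y ⟶ Z} (hf : IsNormal f) (hg : IsNormal g) :
    IsNormal (copair f g) :=
  isNormal_tensor_iff.2 ⟨f, g, hf, hg, rfl⟩

theorem isNormal_braiding_comp {h : Y ⊗ X ⟶ Z} (hh : IsNormal h) :
    IsNormal ((β_ X Y).hom ≫ h) := by
  obtain ⟨f, g, hf, hg, rfl⟩ := isNormal_tensor_iff.1 hh
  rw [braiding_comp_copair]
  exact isNormal_copair hg hf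

theorem precomp_prioritise_mem_disjunctiveForms (p : Fin (M + 1)) {a : MonMap (wire M) Z}
    (ha : a ∈ disjunctiveForms Z) : MonMap.precomp Z (prioritise p) a ∈ disjunctiveForms Z := by
  suffices disjunctiveForms Z ≤ (disjunctiveForms Z).comap (MonMap.precomp Z (prioritise p)) from
    this ha
  refine Subsemiring.closure_le.2 ?_
  rintro f ⟨q, h, hh, hf⟩
  refine Subsemiring.subset_closure ⟨max p q, h, hh, ?_⟩
  rw [← prioritise_comp, Category.assoc, hf]
  rfl

theorem isNormal_wire_of_mem_layers {h : wire M ⟶ Z} [IsMonHom h] (hh : layers GenM h) :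
    IsNormal h :=
  isNormal_wire_iff.2 ⟨⟨h, inferInstance⟩, Subsemiring.subset_closure
    ⟨0, ⟨h, inferInstance⟩, hh, by rw [prioritise_zero, Category.id_comp]⟩, rfl⟩

theorem exists_mergeObj_isNormal (X : Wires M) : ∃ _ : MergeObj X, ∀ (Z : Wires M) [MergeObj Z]
    (h : X ⟶ Z) [IsMonHom h], layers GenM h → IsNormal h := by
  induction X using Wires.induction with
  | unit =>
    refine ⟨inferInstance, fun Z _ h _ _ => ?_⟩
    exact isNormal_unit_iff.2 ((Category.id_comp h).symm.trans (IsMonHom.one_hom h))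
  | wire_tensor X ih =>
    obtain ⟨_, ih⟩ := ih
    refine ⟨inferInstance, fun Z _ h _ hh => ?_⟩
    have left : layers GenM ((ρ_ (wire M)).inv ≫ (𝟙 _ ⊗ₘ η[X]) ≫ h) :=
      (layers GenM).comp_mem _ _ ((layers GenM).id_mem (wire M)) <|
        (layers GenM).comp_mem _ _ ((layers GenM).tensorHom_mem _ _ ((layers GenM).id_mem _)
          MergeObj.one_mem_layers) hh
    have right : layers GenM ((λ_ X).inv ≫ (η[wire M] ⊗ₘ 𝟙 X) ≫ h) :=
      (layers GenM).comp_mem _ _ ((layers GenM).id_mem X) <|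
        (layers GenM).comp_mem _ _ ((layers GenM).tensorHom_mem _ _ MergeObj.one_mem_layers
          ((layers GenM).id_mem _)) hh
    rw [eq_copair h]
    exact isNormal_copair (isNormal_wire_of_mem_layers left) (ih Z _ right)

end Normal

section NormalForms

variable {M : ℕ}

/-- The classes of the diagrams in normal form. -/
def normalForms (M : ℕ) : MorphismProperty (Wires M) :=
  (layers Gen0).comp ((layers Gen1).comp ((layers GenP).comp (layers GenM)))

theorem mem_normalForms_of_mem_disjunctiveForms {Z : Wires M} [MergeObj Z] {a : MonMap (wire M) Z}
    (ha : a ∈ disjunctiveForms Z) : normalForms M a.hom := by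
  have hη := comp_of_right (W₁ := layers GenP) (MergeObj.one_mem_layers (Z := Z))
  have hcopair : CopairClosed ((layers GenP).comp (layers GenM)) Z :=
    (copairClosed_of_mul_mem MergeObj.mul_mem_layers).comp
  refine comp_of_mem_addSubmonoidClosure (homMk_mem_layers Gen0.lose0)
    (homMk_mem_layers Gen0.player0) (comp_of_right hη) hcopair.comp ?_
    (Subsemiring.mem_closure_iff.1 ha)
  intro f hf
  refine comp_of_mem_submonoidClosure (homMk_mem_layers Gen1.lose1)
    (homMk_mem_layers Gen1.player1) hη hcopair ?_ hf
  rintro g ⟨p, h, hh, hg⟩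
  exact ⟨⟨_, prioritise p, h.hom, hg, homMk_mem_layers (GenP.priority p), hh⟩⟩

theorem IsNormal.mem_normalForms {X Z : Wires M} [MergeObj Z] {h : X ⟶ Z} (hh : IsNormal h) :
    normalForms M h := by
  induction X using Wires.induction with
  | unit =>
    rw [isNormal_unit_iff.1 hh]
    exact comp_of_right (comp_of_right (comp_of_right MergeObj.one_mem_layers))
  | wire_tensor X ih =>
    obtain ⟨a, ha, g, hg, rfl⟩ := isNormal_wire_tensor_iff.1 hh
    have hcopair : CopairClosed (normalForms M) Z :=
      (copairClosed_of_mul_mem MergeObj.mul_mem_layers).comp.comp.comp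
    exact hcopair _ _ (mem_normalForms_of_mem_disjunctiveForms ha) (ih hg)

theorem exists_inNormalForm_of_mem_normalForms {X Y : Wires M} {h : X ⟶ Y} (hh : normalForms M h) :
    ∃ d : Syn M X.word Y.word, InNormalForm d ∧ homMk X Y d = h := by
  obtain ⟨⟨A, _, _, rfl, ⟨f₀, h₀, rfl⟩, ⟨⟨B, _, _, rfl, ⟨f₁, h₁, rfl⟩,
    ⟨⟨C, _, _, rfl, ⟨f₂, h₂, rfl⟩, ⟨f₃, h₃, rfl⟩⟩⟩⟩⟩⟩⟩ := hh
  exact ⟨f₀ ⨟ (f₁ ⨟ (f₂ ⨟ f₃)), ⟨_, _, _, f₀, f₁, f₂, f₃, h₀, h₁, h₂, h₃, rfl⟩, rfl⟩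

end NormalForms

/-! ### Acyclic diagrams -/

section AcyclicDiagrams

variable {M : ℕ} {v w : Word}

theorem Acyclic.isRight {f : Syn M v w} (hf : Acyclic f) : IsRight v ∧ IsRight w := by
  induction hf with
  | id k => exact ⟨isRight_rword k, isRight_rword k⟩
  | symm k j =>
    exact ⟨isRight_append.2 ⟨isRight_rword k, isRight_rword j⟩,
      isRight_append.2 ⟨isRight_rword j, isRight_rword k⟩⟩
  | player0 => exact ⟨isRight_rword 1, isRight_rword 2⟩
  | lose0 => exact ⟨isRight_rword 1, isRight_rword 0⟩
  | player1 => exact ⟨isRight_rword 1, isRight_rword 2⟩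
  | lose1 => exact ⟨isRight_rword 1, isRight_rword 0⟩
  | merge => exact ⟨isRight_rword 2, isRight_rword 1⟩
  | start => exact ⟨isRight_rword 0, isRight_rword 1⟩
  | priority => exact ⟨isRight_rword 1, isRight_rword 1⟩
  | comp _ _ hf hg => exact ⟨hf.1, hg.2⟩
  | tensor _ _ hf hg =>
    exact ⟨isRight_append.2 ⟨hf.1, hg.1⟩, isRight_append.2 ⟨hf.2, hg.2⟩⟩

theorem Acyclic.isNormal_comp {f : Syn M v w} (hf : Acyclic f) (hv : IsRight v) (hw : IsRight w)
    {Z : Wires M} [MonObj Z] [IsCommMonObj Z] {g : (⟨w, hw⟩ : Wires M) ⟶ Z} (hg : IsNormal g) :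
    IsNormal (homMk ⟨v, hv⟩ ⟨w, hw⟩ f ≫ g) := by
  induction hf with
  | id k => rwa [show homMk _ _ _ = 𝟙 (⟨rword k, hw⟩ : Wires M) from rfl, Category.id_comp]
  | symm k j =>
    exact isNormal_braiding_comp (X := ⟨rword k, isRight_rword k⟩)
      (Y := ⟨rword j, isRight_rword j⟩) hg
  | player0 =>
    obtain ⟨a, ha, b, hb, rfl⟩ := isNormal_wire_tensor_wire_iff.1 hg
    exact isNormal_wire_iff.2 ⟨a + b, add_mem ha hb, MonMap.hom_add a b⟩
  | lose0 =>
    obtain rfl := isNormal_unit_iff.1 hg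
    exact isNormal_wire_iff.2 ⟨0, zero_mem _, MonMap.hom_zero⟩
  | player1 =>
    obtain ⟨a, ha, b, hb, rfl⟩ := isNormal_wire_tensor_wire_iff.1 hg
    exact isNormal_wire_iff.2 ⟨a * b, mul_mem ha hb, MonMap.hom_mul a b⟩
  | lose1 =>
    obtain rfl := isNormal_unit_iff.1 hg
    exact isNormal_wire_iff.2 ⟨1, one_mem _, MonMap.hom_one⟩
  | merge =>
    obtain ⟨a, -, rfl⟩ := isNormal_wire_iff.1 hg
    exact isNormal_tensor_iff.2 ⟨a.hom, a.hom, hg, hg, mul_comp_eq_copair a.hom⟩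
  | start =>
    obtain ⟨a, -, rfl⟩ := isNormal_wire_iff.1 hg
    exact isNormal_unit_iff.2 (IsMonHom.one_hom a.hom)
  | priority p =>
    obtain ⟨a, ha, rfl⟩ := isNormal_wire_iff.1 hg
    exact isNormal_wire_iff.2 ⟨_, precomp_prioritise_mem_disjunctiveForms p ha, rfl⟩
  | comp hf₁ _ ih₁ ih₂ =>
    have := ih₁ hv hf₁.isRight.2 (ih₂ hf₁.isRight.2 hw hg)
    rwa [← Category.assoc] at this
  | tensor hf₁ hf₂ ih₁ ih₂ =>
    obtain ⟨a, b, ha, hb, rfl⟩ := isNormal_tensor_iff (X := ⟨_, hf₁.isRight.2⟩)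
      (Y := ⟨_, hf₂.isRight.2⟩).1 hg
    exact isNormal_tensor_iff.2 ⟨_, _, ih₁ hf₁.isRight.1 _ ha, ih₂ hf₂.isRight.1 _ hb,
      tensorHom_comp_copair _ _ a b⟩

theorem Layer.acyclic {G : {v w : Word} → Syn M v w → Prop}
    (hG : ∀ {v w : Word} {f : Syn M v w}, G f → Acyclic f) {f : Syn M v w} (hf : Layer G f) :
    Acyclic f := by
  induction hf with
  | base hf => exact hG hf
  | id k => exact .id k
  | symm k j => exact .symm k j
  | comp _ _ hf hg => exact hf.comp hg
  | tensor _ _ hf hg => exact hf.tensor hg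

theorem InNormalForm.acyclic {d : Syn M v w} (hd : InNormalForm d) : Acyclic d := by
  obtain ⟨_, _, _, f₀, f₁, f₂, f₃, h₀, h₁, h₂, h₃, rfl⟩ := hd
  exact (h₀.acyclic (by rintro _ _ _ (_ | _) <;> constructor)).comp <|
    (h₁.acyclic (by rintro _ _ _ (_ | _) <;> constructor)).comp <|
      (h₂.acyclic (by rintro _ _ _ ⟨p⟩; exact .priority p)).comp <|
        h₃.acyclic (by rintro _ _ _ (_ | _) <;> constructor)

end AcyclicDiagrams

theorem acyclic_normalisation_general (M : ℕ) {v w : Word} {d : Syn M v w} (hd : Acyclic d) :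
    ∃ d' : Syn M v w, Acyclic d' ∧ InNormalForm d' ∧ PGAeq d d' := by
  obtain ⟨hv, hw⟩ := hd.isRight
  obtain ⟨_, isNormal_of_mem_layers⟩ := exists_mergeObj_isNormal (⟨w, hw⟩ : Wires M)
  have id_isNormal : IsNormal (𝟙 (⟨w, hw⟩ : Wires M)) :=
    isNormal_of_mem_layers _ _ ((layers GenM).id_mem _)
  have d_isNormal := hd.isNormal_comp hv hw id_isNormal
  rw [Category.comp_id] at d_isNormal
  obtain ⟨d', hd', h⟩ := exists_inNormalForm_of_mem_normalForms d_isNormal.mem_normalForms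
  exact ⟨d', hd'.acyclic, hd', homMk_eq_iff.1 h.symm⟩

/-- **Statement 7** (Acyclic normalisation). Every acyclic diagram `d : ▶^m → ▶^n`
is PGA-equal to an acyclic diagram in normal form. -/
theorem acyclic_normalisation (M : ℕ) (hM : 2 ≤ M) (m n : ℕ)
    (d : Syn M (rword m) (rword n)) (hd : Acyclic d) :
    ∃ d' : Syn M (rword m) (rword n), Acyclic d' ∧ InNormalForm d' ∧ PGAeq d d' :=
  acyclic_normalisation_general M hd

end PaperPG
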